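/- Let F : T → T be a polynomial-like branched covering of a simplicial tree with local degree function deg and global degree D = deg(F). Then: (a) the total number of critical points of F counted with multiplicity is D − 1, that is, Σ_x m(x) = D − 1, where x ranges over all vertices of T together with all ends in ∂T ∖ {∞} (only finitely many terms are nonzero); and (b) for every edge e ∈ E(T), deg(e) equals one plus the sum of m(x) over all vertices and ends x lying below e. -/

import Mathlib

open SimpleGraph Function Opposite

/-- A locally finite simplicial tree together with a self-map that is a
branched covering: a simplicial map (edges map onto edges) such that the
induced map on edges adjacent to any vertex is surjective onto the edges
adjacent to the image vertex, and every vertex has finitely many preimages. -/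
structure TreeDyn (V : Type) where
  G : SimpleGraph V
  isTree : G.IsTree
  locFin : ∀ v : V, (G.neighborSet v).Finite
  F : V → V
  adjMap : ∀ ⦃v w : V⦄, G.Adj v w → G.Adj (F v) (F w)
  edgeSurj : ∀ ⦃v w' : V⦄, G.Adj (F v) w' → ∃ w : V, G.Adj v w ∧ F w = w'
  finFibers : ∀ v' : V, {v : V | F v = v'}.Finite

namespace TreeDyn

variable {V : Type}

/-- A local degree function for the branched covering `T.F`: positive on
vertices and edges (edges adjacent to `v` are recorded by their other
endpoint), symmetric on edges, satisfying the Riemann–Hurwitz style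
inequality `2 deg(v) - 2 ≥ Σ (deg e - 1)` at each vertex, and the local
equality `deg v = Σ {deg e' : e' adjacent to v, F(e') = F(e)}` for each
edge `e` adjacent to `v`. -/
def IsLocalDeg (T : TreeDyn V) (dV : V → ℕ) (dE : V → V → ℕ) : Prop :=
  (∀ v w : V, dE v w = dE w v) ∧
  (∀ v : V, 0 < dV v) ∧
  (∀ ⦃v w : V⦄, T.G.Adj v w → 0 < dE v w) ∧
  (∀ v : V, (∑ᶠ w ∈ T.G.neighborSet v, (dE v w - 1)) + 2 ≤ 2 * dV v) ∧
  (∀ ⦃v w : V⦄, T.G.Adj v w →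
    dV v = ∑ᶠ w' ∈ {w' : V | T.G.Adj v w' ∧ T.F w' = T.F w}, dE v w')

/-- `x` and `y` are in the same grand orbit if `F^[n] x = F^[m] y` for some `n, m > 0`. -/
def GrandOrbit (T : TreeDyn V) (x y : V) : Prop :=
  ∃ n m : ℕ, 0 < n ∧ 0 < m ∧ T.F^[n] x = T.F^[m] y

end TreeDyn

/-- The natural topology on the space of ends of a graph: the subspace
topology induced from the product of the (discrete) spaces of components
of complements of finite sets. -/
def endTop {V : Type} (G : SimpleGraph V) : TopologicalSpace G.end :=
  TopologicalSpace.induced Subtype.val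
    (⨅ K : (Finset V)ᵒᵖ, TopologicalSpace.induced (fun f => f K) ⊥)

/-- An end is isolated if it is an isolated point of the space of ends. -/
def IsIsolatedEnd {V : Type} (G : SimpleGraph V) (e : G.end) : Prop :=
  @IsOpen G.end (endTop G) {e}

namespace TreeDyn

variable {V : Type}

/-- `T` is polynomial-like with distinguished end `infty`:
(II) a local degree function exists, (I) `infty` is the unique isolated end,
(III) no vertex has valence one, and (IV) the grand orbit of every vertex
contains a vertex of valence at least three. -/
def IsPolyLike (T : TreeDyn V) (infty : T.G.end) : Prop :=
  (∃ dV dE, T.IsLocalDeg dV dE) ∧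
  IsIsolatedEnd T.G infty ∧
  (∀ e : T.G.end, IsIsolatedEnd T.G e → e = infty) ∧
  (∀ v : V, (T.G.neighborSet v).ncard ≠ 1) ∧
  (∀ v : V, ∃ w : V, T.GrandOrbit v w ∧ 3 ≤ (T.G.neighborSet w).ncard)

/-- The vertex `x` lies below the vertex `v` (the path from `x` to the
end `infty` passes through `v`): either `x = v`, or `x` and `infty`
determine different components of the complement of `{v}`. -/
def Below (T : TreeDyn V) (infty : T.G.end) (v x : V) : Prop :=
  x = v ∨ ∃ h : x ∉ (({v} : Finset V) : Set V),
    T.G.componentComplMk h ≠ infty.val (op ({v} : Finset V))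

/-- The end `p` lies below the vertex `v` (the path from `p` to `infty`
passes through `v`). -/
def EndBelow (T : TreeDyn V) (infty : T.G.end) (v : V) (p : T.G.end) : Prop :=
  p.val (op ({v} : Finset V)) ≠ infty.val (op ({v} : Finset V))

/-- `v₀` is the base of the tree: the vertex of valence ≥ 3 closest to
`infty`, i.e. every vertex of valence ≥ 3 lies below it. -/
def IsBase (T : TreeDyn V) (infty : T.G.end) (v₀ : V) : Prop :=
  3 ≤ (T.G.neighborSet v₀).ncard ∧
  ∀ w : V, 3 ≤ (T.G.neighborSet w).ncard → T.Below infty v₀ w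

open Classical in
/-- The combinatorial height relative to the base `v₀`: `|h v|` is the
graph distance to `v₀`, with `h v ≥ 0` exactly when `v` lies on the ray
from `v₀` to `infty` (i.e. `v₀` lies below `v`). -/
noncomputable def height (T : TreeDyn V) (infty : T.G.end) (v₀ : V) (v : V) : ℤ :=
  if T.Below infty v v₀ then (T.G.dist v₀ v : ℤ) else -(T.G.dist v₀ v : ℤ)

/-- `Dg` is the global degree of `T.F`: for every edge `{v,w}`, the sum of
the degrees of the edges mapping onto it equals `Dg`. -/
def IsGlobalDeg (T : TreeDyn V) (dE : V → V → ℕ) (Dg : ℕ) : Prop :=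
  ∀ ⦃v w : V⦄, T.G.Adj v w →
    Dg = ∑ᶠ a ∈ {a : V | T.F a = v}, ∑ᶠ b ∈ {b : V | T.G.Adj a b ∧ T.F b = w}, dE a b

/-- The critical multiplicity of a vertex. -/
noncomputable def multV (T : TreeDyn V) (dV : V → ℕ) (dE : V → V → ℕ) (v : V) : ℕ :=
  2 * dV v - 2 - ∑ᶠ w ∈ T.G.neighborSet v, (dE v w - 1)

/-- The critical multiplicity of an end `p ≠ infty`: the limiting
(= minimal) value of `dV` along the path from `infty` to `p`, minus one. -/
noncomputable def multEnd (T : TreeDyn V) (infty : T.G.end) (dV : V → ℕ) (p : T.G.end) : ℕ :=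
  sInf {d : ℕ | ∃ v : V, T.EndBelow infty v p ∧ dV v = d} - 1

/-- `μ` is the mass function: `μ v = 1` for `h(v) ≥ 0` and
`μ(F v) = (deg F / deg v) · μ v`. -/
def IsMass (T : TreeDyn V) (infty : T.G.end) (v₀ : V) (dV : V → ℕ) (Dg : ℕ)
    (μ : V → ℚ) : Prop :=
  (∀ v : V, 0 ≤ T.height infty v₀ v → μ v = 1) ∧
  (∀ v : V, μ (T.F v) = ((Dg : ℚ) / (dV v : ℚ)) * μ v)

end TreeDyn

/-!
Write `π v` for the neighbour of `v` on the ray from `v` to `∞`. The crux is that `∞` is totally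
invariant, i.e. `F ∘ π = π ∘ F`. If some edge were turned upside down, then, `∞` being isolated, all
edges below some vertex `s` would be, and each level below `s` would collapse to a single point. As
`∞` is the only isolated end, these levels are arbitrarily large, while fibres have at most
`deg F` points.

Once `F` commutes with `π`, no other edge at `v` has the same image as the edge towards `∞`, so this
edge has degree `deg v`, and the definition of the critical multiplicity becomes
`deg w - 1 = m(w) + ∑ (deg c - 1)`, the sum being over the vertices `c` immediately below `w`.
Iterating down from `w` collects the critical vertices level by level. Degrees split only finitely
often on the way, and each branch that keeps its degree `> 1` forever ends in a critical end. Hence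
`deg w - 1` counts the critical points below `w`. High up on the way to `∞` the fibres of `F` are
singletons, so the degree is `deg F`, and no critical point lies elsewhere.
-/

section GraphEnds

variable {V : Type*} {G : SimpleGraph V}

theorem componentCompl_mem_iff_exists_walk {K : Set V} {C : G.ComponentCompl K} {x y : V}
    (hx : x ∈ C) : y ∈ C ↔ ∃ q : G.Walk x y, ∀ z ∈ q.support, z ∉ K := by
  obtain ⟨hxK, rfl⟩ := hx
  constructor
  · rintro ⟨hyK, hxy⟩
    obtain ⟨q⟩ : (G.induce Kᶜ).Reachable ⟨x, hxK⟩ ⟨y, hyK⟩ := ConnectedComponent.exact hxy.symm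
    have avoids : ∀ z ∈ (q.map (Embedding.induce Kᶜ).toHom).support, z ∉ K := by
      simp only [Walk.support_map, List.mem_map]
      rintro _ ⟨⟨z, hz⟩, -, rfl⟩
      exact hz
    exact ⟨_, avoids⟩
  · rintro ⟨q, hq⟩
    exact ⟨hq y q.end_mem_support, ConnectedComponent.sound ⟨(q.induce Kᶜ hq).reverse⟩⟩

theorem componentCompl_ray_mem_iff {K : Set V} {C : G.ComponentCompl K} {r : ℕ → V} {n : ℕ}
    (hadj : ∀ i, G.Adj (r i) (r (i + 1))) (hK : ∀ i ≤ n, r i ∉ K) : r 0 ∈ C ↔ r n ∈ C := by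
  induction n with
  | zero => rfl
  | succ n ih =>
    rw [ih fun i hi => hK i (by lia)]
    exact ⟨fun h => C.mem_of_adj _ _ h (hK _ le_rfl) (hadj n),
      fun h => C.mem_of_adj _ _ h (hK n (by lia)) (hadj n).symm⟩

/-- The component of the complement of the finite set `K` selected by the end `p`. -/
def endComp (p : G.end) (K : Finset V) : G.ComponentCompl (K : Set V) := p.val (op K)

theorem endComp_antitone {p : G.end} {K L : Finset V} (h : L ⊆ K) {x : V} (hx : x ∈ endComp p K) :
    x ∈ endComp p L := by
  obtain ⟨hxK, hxp⟩ := hx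
  exact ⟨_, (end_hom_mk_of_mk G p.2 (CategoryTheory.opHomOfLE h) hxK hxp.symm).symm⟩

theorem endComp_eq_of_mem {p q : G.end} {K : Finset V} {x : V} (hp : x ∈ endComp p K)
    (hq : x ∈ endComp q K) : endComp p K = endComp q K := by
  obtain ⟨_, hp⟩ := hp
  obtain ⟨_, hq⟩ := hq
  exact hp.symm.trans hq

theorem endComp_eq_of_subset {p q : G.end} {K L : Finset V} (h : L ⊆ K)
    (hpq : endComp p K = endComp q K) : endComp p L = endComp q L := by
  obtain ⟨x, hx⟩ := (endComp p K).nonempty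
  exact endComp_eq_of_mem (endComp_antitone h hx) (endComp_antitone h (hpq ▸ hx))

theorem end_ext {p q : G.end} (h : ∀ K, endComp p K = endComp q K) : p = q :=
  Subtype.ext (funext fun K => h K.unop)

theorem exists_forall_ge_notMem {r : ℕ → V} (hr : Injective r) (K : Finset V) :
    ∃ n, ∀ m ≥ n, r m ∉ K := by
  obtain ⟨n, hn⟩ := (K.finite_toSet.preimage hr.injOn).bddAbove
  exact ⟨n + 1, fun m hm h => by have := hn h; lia⟩

theorem exists_end_of_ray {r : ℕ → V} (hr : Injective r) (hadj : ∀ n, G.Adj (r n) (r (n + 1))) :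
    ∃ p : G.end, ∀ (K : Finset V) (n : ℕ), (∀ m ≥ n, r m ∉ K) → r n ∈ endComp p K := by
  choose N hN using exists_forall_ge_notMem hr
  have tail_mem {K : Finset V} {C : G.ComponentCompl (K : Set V)} {m n : ℕ} (hmn : m ≤ n)
      (hm : ∀ k ≥ m, r k ∉ K) : r m ∈ C ↔ r n ∈ C := by
    obtain ⟨d, rfl⟩ := Nat.exists_eq_add_of_le hmn
    exact componentCompl_ray_mem_iff (r := fun i => r (m + i)) (fun i => hadj (m + i))
      fun i _ => hm _ (by lia)
  have tail_comp (K : Finset V) {m n : ℕ} (hm : ∀ k ≥ m, r k ∉ K) (hn : ∀ k ≥ n, r k ∉ K) :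
      r n ∈ G.componentComplMk (K := (K : Set V)) (hm m le_rfl) := by
    have hmem := G.componentComplMk_mem (K := (K : Set V)) (hm m le_rfl)
    rw [tail_mem (le_max_left m n) hm] at hmem
    exact (tail_mem (le_max_right m n) hn).2 hmem
  refine ⟨⟨fun K => G.componentComplMk (K := (K.unop : Set V)) (hN K.unop _ le_rfl), ?_⟩,
    fun K n => tail_comp K (hN K)⟩
  intro K L f
  exact (tail_comp L.unop (hN L.unop)
    fun k hk h => hN K.unop k hk (CategoryTheory.le_of_op_hom f h)).2

theorem isIsolatedEnd_iff {V : Type} {G : SimpleGraph V} {p : G.end} :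
    IsIsolatedEnd G p ↔ ∃ K, ∀ q, endComp q K = endComp p K → q = p := by
  classical
  let S (K : Finset V) : Set G.end := {q | endComp q K = endComp p K}
  have nhds_eq : @nhds _ (endTop G) p = ⨅ K : (Finset V)ᵒᵖ, Filter.principal (S K.unop) := by
    refine (@nhds_induced _ _ (_) Subtype.val p).trans ?_
    simp only [nhds_iInf, nhds_induced, @nhds_discrete _ ⊥ ⟨rfl⟩, Filter.comap_iInf,
      Filter.comap_pure, Filter.comap_principal]
    rfl
  have directed : Directed (· ≥ ·) fun K : (Finset V)ᵒᵖ => Filter.principal (S K.unop) := by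
    intro K L
    refine ⟨op (K.unop ∪ L.unop), Filter.principal_mono.2 fun q hq => ?_,
      Filter.principal_mono.2 fun q hq => ?_⟩
    · exact endComp_eq_of_subset Finset.subset_union_left hq
    · exact endComp_eq_of_subset Finset.subset_union_right hq
  calc IsIsolatedEnd G p ↔ {p} ∈ @nhds _ (endTop G) p := by
        simp [IsIsolatedEnd, @isOpen_iff_mem_nhds _ (endTop G)]
    _ ↔ _ := by
        rw [nhds_eq, Filter.mem_iInf_of_directed directed]
        exact ⟨fun ⟨K, h⟩ => ⟨K.unop, h⟩, fun ⟨K, h⟩ => ⟨op K, h⟩⟩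

end GraphEnds

section Towards

variable {V : Type*} {G : SimpleGraph V}

theorem mem_componentCompl_singleton_iff_dist_lt (hG : G.IsTree) {v w x : V}
    {C : G.ComponentCompl (({v} : Finset V) : Set V)} (hx : x ∈ C) (hvw : G.Adj v w) :
    w ∈ C ↔ G.dist x w < G.dist x v := by
  classical
  rw [componentCompl_mem_iff_exists_walk hx]
  constructor
  · rintro ⟨q, hq⟩
    obtain ⟨r, hr, hr_length⟩ := hG.connected.exists_path_of_dist x v
    have hv : v ∉ q.bypass.support := fun hv => hq v (q.support_bypass_subset_support hv) (by simp)
    have hw : w ∈ r.support :=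
      hG.isAcyclic.mem_support_of_ne_mem_support_of_adj_of_isPath hr q.bypass_isPath hvw hv
    calc G.dist x w ≤ (r.takeUntil w hw).length := G.dist_le _
      _ < r.length := r.length_takeUntil_lt_length hw hvw.ne'
      _ = G.dist x v := hr_length
  · intro hlt
    obtain ⟨q, hq_length⟩ := hG.connected.exists_walk_length_eq_dist x w
    refine ⟨q, fun z hz hzv => ?_⟩
    obtain rfl : z = v := by simpa using hzv
    have := G.dist_le (q.takeUntil z hz)
    have := q.length_takeUntil_le_length hz
    lia

theorem exists_adj_mem_endComp (hG : G.Connected) (p : G.end) (v : V) :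
    ∃ u, G.Adj v u ∧ u ∈ endComp p {v} := by
  obtain ⟨⟨u, v'⟩, hu, hv', huv⟩ :=
    ComponentCompl.exists_adj_boundary_pair hG.preconnected (by simp) (endComp p {v})
  obtain rfl : v' = v := by simpa using hv'
  exact ⟨u, huv.symm, hu⟩

variable (hG : G.IsTree) (p : G.end)

/-- In a tree, the neighbour of `v` on the ray from `v` to the end `p`. For the end `∞` of a
polynomial-like tree this is the vertex immediately above `v`. -/
noncomputable def towards (v : V) : V := (exists_adj_mem_endComp hG.connected p v).choose

theorem adj_towards (v : V) : G.Adj v (towards hG p v) :=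
  (exists_adj_mem_endComp hG.connected p v).choose_spec.1

theorem towards_mem_endComp (v : V) : towards hG p v ∈ endComp p {v} :=
  (exists_adj_mem_endComp hG.connected p v).choose_spec.2

variable {p}

theorem mem_endComp_singleton_iff_eq_towards {v w : V} (hvw : G.Adj v w) :
    w ∈ endComp p {v} ↔ w = towards hG p v := by
  refine ⟨fun hw => ?_, fun hw => hw ▸ towards_mem_endComp hG p v⟩
  have hlt := (mem_componentCompl_singleton_iff_dist_lt hG hw (adj_towards hG p v)).1
    (towards_mem_endComp hG p v)
  rw [dist_eq_one_iff_adj.2 hvw.symm, Nat.lt_one_iff] at hlt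
  exact hG.connected.dist_eq_zero_iff.1 hlt

theorem dist_lt_iff_eq_towards {v w x : V} (hx : x ∈ endComp p {v}) (hvw : G.Adj v w) :
    G.dist x w < G.dist x v ↔ w = towards hG p v := by
  rw [← mem_endComp_singleton_iff_eq_towards hG hvw,
    mem_componentCompl_singleton_iff_dist_lt hG hx hvw]

theorem eq_towards_or_eq_towards (p : G.end) {v w : V} (hvw : G.Adj v w) :
    w = towards hG p v ∨ v = towards hG p w := by
  classical
  obtain ⟨x, hx⟩ := (endComp p {v, w}).nonempty
  rw [← dist_lt_iff_eq_towards hG (endComp_antitone (by simp) hx) hvw,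
    ← dist_lt_iff_eq_towards hG (endComp_antitone (by simp) hx) hvw.symm]
  have := hG.dist_eq_dist_add_one_of_adj x hvw
  lia

theorem surjective_towards (p : G.end) (h : ∀ v, (G.neighborSet v).ncard ≠ 1) :
    Surjective (towards hG p) := by
  intro v
  by_contra! hv
  refine h v (Set.ncard_eq_one.2 ⟨towards hG p v, Set.eq_singleton_iff_unique_mem.2
    ⟨adj_towards hG p v, fun w hw => ?_⟩⟩)
  exact (eq_towards_or_eq_towards hG p hw).resolve_right fun e => hv w e.symm

theorem towards_iterate_ne {n : ℕ} (hn : n ≠ 0) (v : V) : (towards hG p)^[n] v ≠ v := by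
  classical
  obtain ⟨x, hx⟩ :=
    (endComp p ((Finset.range n).image fun i => (towards hG p)^[i] v)).nonempty
  have dist_add_le : ∀ i ≤ n, G.dist x ((towards hG p)^[i] v) + i ≤ G.dist x v := by
    intro i hi
    induction i with
    | zero => simp
    | succ i ih =>
      have hmem : (towards hG p)^[i] v ∈ (Finset.range n).image fun i => (towards hG p)^[i] v :=
        Finset.mem_image.2 ⟨i, by simpa using hi, rfl⟩
      have hlt := (dist_lt_iff_eq_towards hG
        (endComp_antitone (Finset.singleton_subset_iff.2 hmem) hx) (adj_towards hG p _)).2 rfl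
      rw [iterate_succ_apply']
      have := ih (by lia)
      lia
  intro h
  have := dist_add_le n le_rfl
  rw [h] at this
  lia

theorem towards_iterate_injective (v : V) : Injective fun n => (towards hG p)^[n] v := by
  intro m n
  wlog h : m ≤ n generalizing m n
  · exact fun e => (this (by lia) e.symm).symm
  intro e
  by_contra hne
  refine towards_iterate_ne hG (p := p) (n := n - m) (by lia) ((towards hG p)^[m] v) ?_
  rw [← iterate_add_apply, Nat.sub_add_cancel h]
  exact e.symm

theorem exists_common_ancestor (p : G.end) (v w : V) :
    ∃ i j, (towards hG p)^[i] v = (towards hG p)^[j] w := by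
  obtain ⟨q⟩ := hG.connected v w
  induction q with
  | nil => exact ⟨0, 0, rfl⟩
  | cons hvu _ ih =>
    obtain ⟨i, j, e⟩ := ih
    rcases eq_towards_or_eq_towards hG p hvu with rfl | rfl
    · exact ⟨i + 1, j, e⟩
    · exact ⟨i, j + 1, by rw [iterate_succ_apply', ← e, ← iterate_succ_apply, iterate_succ_apply']⟩

theorem exists_upper_bound (p : G.end) (K : Finset V) :
    ∃ b, ∀ v ∈ K, ∃ k, (towards hG p)^[k] v = b := by
  have := hG.connected.nonempty
  let le (x y : V) : Prop := ∃ k, (towards hG p)^[k] x = y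
  have : IsTrans V le := ⟨by
    rintro x _ _ ⟨k, rfl⟩ ⟨l, rfl⟩
    exact ⟨l + k, iterate_add_apply _ _ _ _⟩⟩
  have directed : Directed le id := fun x y => by
    obtain ⟨i, j, e⟩ := exists_common_ancestor hG p x y
    exact ⟨_, ⟨i, rfl⟩, ⟨j, e.symm⟩⟩
  exact directed.finset_le K

theorem towards_mem_endComp_of_mem {K : Finset V} {x : V} (hx : x ∈ endComp p K) :
    towards hG p x ∈ endComp p K := by
  refine ComponentCompl.mem_of_adj _ _ hx (fun hK => ?_) (adj_towards hG p x)
  have hx' : x = towards hG p (towards hG p x) :=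
    (mem_endComp_singleton_iff_eq_towards hG (adj_towards hG p x).symm).1
      (endComp_antitone (Finset.singleton_subset_iff.2 hK) hx)
  exact towards_iterate_ne hG (p := p) two_ne_zero x hx'.symm

theorem mem_endComp_iff {K : Finset V} {x : V} :
    x ∈ endComp p K ↔ ∀ n, (towards hG p)^[n] x ∉ K := by
  have iterate_mem {y : V} (hy : y ∈ endComp p K) (n : ℕ) :
      (towards hG p)^[n] y ∈ endComp p K :=
    Iterate.rec (· ∈ endComp p K) hy (fun _ => towards_mem_endComp_of_mem hG) n
  refine ⟨fun hx n => ComponentCompl.notMem_of_mem (iterate_mem hx n), fun hx => ?_⟩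
  obtain ⟨y, hy⟩ := (endComp p K).nonempty
  obtain ⟨i, j, e⟩ := exists_common_ancestor hG p x y
  refine (componentCompl_ray_mem_iff (r := fun n => (towards hG p)^[n] x) (n := i) (fun n => ?_)
    fun n _ => hx n).2 (e ▸ iterate_mem hy j)
  simp only [iterate_succ_apply']
  exact adj_towards hG p _

theorem endComp_eq_of_forall_singleton (hG : G.IsTree) {q : G.end} {K : Finset V}
    (h : ∀ v ∈ K, endComp p {v} = endComp q {v}) : endComp p K = endComp q K := by
  obtain ⟨x, hx⟩ := (endComp p K).nonempty
  refine endComp_eq_of_mem hx ((mem_endComp_iff hG).2 fun n hn => ?_)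
  have hxq := endComp_antitone (Finset.singleton_subset_iff.2 hn) hx
  rw [h _ hn] at hxq
  exact (mem_endComp_iff hG).1 hxq n (Finset.mem_singleton_self _)

end Towards

namespace TreeDyn

section Below

variable {V : Type} {T : TreeDyn V} {infty : T.G.end}

local notation "π" => towards T.isTree infty

theorem below_iff {w x : V} : T.Below infty w x ↔ ∃ k, π^[k] x = w := by
  have below_iff_notMem : T.Below infty w x ↔ x ∉ endComp infty {w} := by
    by_cases hxw : x = w
    · exact iff_of_true (Or.inl hxw) fun hx => ComponentCompl.notMem_of_mem hx (by simp [hxw])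
    · have hx : x ∉ (({w} : Finset V) : Set V) := by simpa using hxw
      exact (or_iff_right hxw).trans
        ⟨fun ⟨_, h⟩ ⟨_, h'⟩ => h h', fun h => ⟨hx, fun h' => h ⟨hx, h'⟩⟩⟩
  rw [below_iff_notMem, mem_endComp_iff T.isTree]
  simp

theorem endBelow_iff_notMem {p : T.G.end} {v x : V} (hx : x ∈ endComp p {v}) :
    T.EndBelow infty v p ↔ x ∉ endComp infty {v} :=
  not_congr ⟨fun h : endComp p {v} = endComp infty {v} => h ▸ hx, endComp_eq_of_mem hx⟩

theorem endBelow_iff_of_mem_endComp {p : T.G.end} {v x : V} (hx : x ∈ endComp p {v}) :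
    T.EndBelow infty v p ↔ ∃ k, π^[k] x = v := by
  rw [endBelow_iff_notMem hx, mem_endComp_iff T.isTree]
  simp

theorem endBelow_iff_towards_ne {v : V} {p : T.G.end} :
    T.EndBelow infty v p ↔ towards T.isTree p v ≠ π v := by
  rw [endBelow_iff_notMem (towards_mem_endComp T.isTree p v),
    mem_endComp_singleton_iff_eq_towards T.isTree (adj_towards T.isTree p v)]

theorem EndBelow.eq_towards {p : T.G.end} {c : V} (h : T.EndBelow infty c p) :
    c = towards T.isTree p (π c) :=
  (eq_towards_or_eq_towards T.isTree p (adj_towards T.isTree infty c)).resolve_left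
    fun e => endBelow_iff_towards_ne.1 h e.symm

theorem EndBelow.parent {p : T.G.end} {v : V} (h : T.EndBelow infty v p) :
    T.EndBelow infty (π v) p := by
  rw [endBelow_iff_towards_ne, ← h.eq_towards]
  exact (towards_iterate_ne T.isTree two_ne_zero v).symm

theorem EndBelow.iterate {p : T.G.end} {v : V} (h : T.EndBelow infty v p) (n : ℕ) :
    T.EndBelow infty (π^[n] v) p :=
  Iterate.rec (T.EndBelow infty · p) h (fun _ => EndBelow.parent) n

theorem EndBelow.exists_child {p : T.G.end} {w : V} (h : T.EndBelow infty w p) :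
    ∃ c, π c = w ∧ T.EndBelow infty c p := by
  have parent_eq : π (towards T.isTree p w) = w :=
    ((eq_towards_or_eq_towards T.isTree infty (adj_towards T.isTree p w)).resolve_left
      (endBelow_iff_towards_ne.1 h)).symm
  refine ⟨towards T.isTree p w, parent_eq, endBelow_iff_towards_ne.2 ?_⟩
  rw [parent_eq]
  exact towards_iterate_ne T.isTree two_ne_zero w

theorem EndBelow.exists_descendant {p : T.G.end} {w : V} (h : T.EndBelow infty w p) (n : ℕ) :
    ∃ c, π^[n] c = w ∧ T.EndBelow infty c p := by
  induction n with
  | zero => exact ⟨w, rfl, h⟩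
  | succ n ih =>
    obtain ⟨c, hc, hcp⟩ := ih
    obtain ⟨d, rfl, hdp⟩ := hcp.exists_child
    exact ⟨d, hc, hdp⟩

theorem EndBelow.eq_of_iterate_eq {p : T.G.end} {v w : V} {n : ℕ} (hv : T.EndBelow infty v p)
    (hw : T.EndBelow infty w p) (h : π^[n] v = π^[n] w) : v = w := by
  induction n with
  | zero => exact h
  | succ n ih =>
    rw [iterate_succ_apply', iterate_succ_apply'] at h
    exact ih (by rw [(hv.iterate n).eq_towards, h, ← (hw.iterate n).eq_towards])

theorem EndBelow.comparable {p : T.G.end} {v w : V} (hv : T.EndBelow infty v p)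
    (hw : T.EndBelow infty w p) : (∃ k, π^[k] v = w) ∨ ∃ k, π^[k] w = v := by
  obtain ⟨i, j, e⟩ := exists_common_ancestor T.isTree infty v w
  rcases le_total i j with h | h
  · rw [← Nat.add_sub_of_le h, iterate_add_apply] at e
    exact Or.inr ⟨_, (hv.eq_of_iterate_eq (hw.iterate _) e).symm⟩
  · rw [← Nat.add_sub_of_le h, iterate_add_apply] at e
    exact Or.inl ⟨_, (hv.iterate _).eq_of_iterate_eq hw e⟩

theorem end_ext_of_endBelow_iff {p q : T.G.end}
    (h : ∀ v, T.EndBelow infty v p ↔ T.EndBelow infty v q) : p = q := by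
  refine end_ext fun K => endComp_eq_of_forall_singleton T.isTree fun v _ => ?_
  by_cases hv : T.EndBelow infty v p
  · obtain ⟨c, rfl, hc⟩ := hv.exists_child
    have hcp := towards_mem_endComp T.isTree p (π c)
    have hcq := towards_mem_endComp T.isTree q (π c)
    rw [← hc.eq_towards] at hcp
    rw [← ((h c).1 hc).eq_towards] at hcq
    exact endComp_eq_of_mem hcp hcq
  · exact (not_not.1 hv).trans (not_not.1 (mt (h v).2 hv)).symm

theorem exists_endBelow {p : T.G.end} (hp : p ≠ infty) : ∃ v, T.EndBelow infty v p := by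
  by_contra! h
  exact hp (end_ext_of_endBelow_iff fun v => iff_of_false (h v) (not_not.2 rfl))

theorem EndBelow.ne_infty {p : T.G.end} {v : V} (h : T.EndBelow infty v p) : p ≠ infty :=
  fun e => h (e ▸ rfl)

theorem exists_separating {p q : T.G.end} {x : V} (hp : T.EndBelow infty x p)
    (hq : T.EndBelow infty x q) (hpq : p ≠ q) : ∃ n c d,
      π^[n] c = x ∧ π^[n] d = x ∧ c ≠ d ∧ T.EndBelow infty c p ∧ T.EndBelow infty d q := by
  wlog h : ∃ c, T.EndBelow infty c p ∧ ¬ T.EndBelow infty c q generalizing p q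
  · obtain ⟨n, d, c, hd, hc, hne, hdq, hcp⟩ := this hq hp hpq.symm (by
      by_contra! h'
      push Not at h
      exact hpq (end_ext_of_endBelow_iff fun v => ⟨h v, h' v⟩))
    exact ⟨n, c, d, hc, hd, hne.symm, hcp, hdq⟩
  obtain ⟨c, hcp, hcq⟩ := h
  obtain ⟨n, rfl⟩ := (hcp.comparable hp).resolve_right fun ⟨k, hk⟩ => hcq (hk ▸ hq.iterate k)
  obtain ⟨d, hd, hdq⟩ := hq.exists_descendant n
  exact ⟨n, c, d, rfl, hd, fun e => hcq (e ▸ hdq), hcp, hdq⟩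

variable (T infty) in
/-- A ray of the tree descending away from `infty`: each vertex is immediately above the next. -/
def IsDescending (c : ℕ → V) : Prop := ∀ n, π (c (n + 1)) = c n

theorem exists_descending {P : V → Prop} (hP : ∀ y, P y → ∃ c, π c = y ∧ P c) {x : V}
    (hx : P x) : ∃ c : ℕ → V, c 0 = x ∧ T.IsDescending infty c ∧ ∀ n, P (c n) := by
  choose f hf hfP using hP
  let next (y : {y // P y}) : {y // P y} := ⟨f y.1 y.2, hfP y.1 y.2⟩
  refine ⟨fun n => (next^[n] ⟨x, hx⟩).1, rfl, fun n => ?_, fun n => (next^[n] ⟨x, hx⟩).2⟩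
  simp only [iterate_succ_apply']
  exact hf _ _

namespace IsDescending

variable {c : ℕ → V}

theorem iterate_add (hc : T.IsDescending infty c) (n d : ℕ) : π^[d] (c (n + d)) = c n := by
  induction d with
  | zero => rfl
  | succ d ih => rw [iterate_succ_apply, ← Nat.add_assoc, hc, ih]

theorem injective (hc : T.IsDescending infty c) : Injective c := by
  intro n m
  wlog h : n ≤ m generalizing n m
  · exact fun e => (this (by lia) e.symm).symm
  intro e
  obtain ⟨d, rfl⟩ := Nat.exists_eq_add_of_le h
  by_contra hd
  exact towards_iterate_ne T.isTree (n := d) (by simpa using hd) _ ((hc.iterate_add n d).trans e)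

theorem exists_end (hc : T.IsDescending infty c) : ∃ p, ∀ n, T.EndBelow infty (c n) p := by
  obtain ⟨p, hp⟩ := exists_end_of_ray hc.injective fun n =>
    (hc n ▸ adj_towards T.isTree infty (c (n + 1))).symm
  refine ⟨p, fun n => (endBelow_iff_of_mem_endComp (hp {c n} (n + 1) fun m hm h => ?_)).2
    ⟨1, hc n⟩⟩
  have := hc.injective (Finset.mem_singleton.1 h)
  lia

theorem exists_iterate_eq (hc : T.IsDescending infty c) {p : T.G.end}
    (hcp : ∀ n, T.EndBelow infty (c n) p) {v : V} (hv : T.EndBelow infty v p) :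
    ∃ n k, π^[k] (c n) = v := by
  rcases hv.comparable (hcp 0) with ⟨k, hk⟩ | ⟨k, hk⟩
  · have hck := hc.iterate_add 0 k
    rw [zero_add] at hck
    exact ⟨k, 0, (hcp k).eq_of_iterate_eq hv (hck.trans hk.symm)⟩
  · exact ⟨0, k, hk⟩

end IsDescending

end Below

end TreeDyn

namespace TreeDyn

section TotalInvariance

variable {V : Type} {T : TreeDyn V} {infty : T.G.end} {dV : V → ℕ} {dE : V → V → ℕ} {Dg : ℕ}

local notation "π" => towards T.isTree infty

theorem exists_endBelow_of_surjective (hπ : Surjective π) (v : V) : ∃ p, T.EndBelow infty v p := by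
  obtain ⟨c, rfl, hc, -⟩ := exists_descending (T := T) (infty := infty) (P := fun _ => True)
    (fun y _ => (hπ y).imp fun _ h => ⟨h, trivial⟩) (x := v) trivial
  obtain ⟨p, hp⟩ := hc.exists_end
  exact ⟨p, hp 0⟩

theorem exists_comparable_of_isIsolatedEnd (hiso : IsIsolatedEnd T.G infty)
    (hπ : Surjective π) : ∃ b, ∀ x, (∃ k, π^[k] x = b) ∨ ∃ k, π^[k] b = x := by
  obtain ⟨K, hK⟩ := isIsolatedEnd_iff.1 hiso
  obtain ⟨b, hb⟩ := exists_upper_bound T.isTree infty K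
  refine ⟨b, fun x => ?_⟩
  obtain ⟨p, hp⟩ := exists_endBelow_of_surjective hπ x
  obtain ⟨v, hvK, hvp⟩ : ∃ v ∈ K, T.EndBelow infty v p := by
    by_contra! h
    exact hp.ne_infty (hK p (endComp_eq_of_forall_singleton T.isTree
      fun v hv => not_not.1 (h v hv)))
  obtain ⟨k, rfl⟩ := hb v hvK
  exact hp.comparable (hvp.iterate k)

theorem exists_branching_of_unique_isolated (huniq : ∀ e, IsIsolatedEnd T.G e → e = infty)
    (hπ : Surjective π) (v : V) : ∃ n c d, π^[n] c = v ∧ π^[n] d = v ∧ c ≠ d := by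
  obtain ⟨p, hp⟩ := exists_endBelow_of_surjective hπ v
  obtain ⟨q, hq, hqp⟩ : ∃ q, endComp q {v} = endComp p {v} ∧ q ≠ p := by
    have not_isolated := mt (huniq p) hp.ne_infty
    rw [isIsolatedEnd_iff] at not_isolated
    push Not at not_isolated
    exact not_isolated {v}
  have hqv : T.EndBelow infty v q := fun h => hp (hq.symm.trans h)
  obtain ⟨n, c, d, hc, hd, hne, -⟩ := exists_separating hqv hp hqp
  exact ⟨n, c, d, hc, hd, hne⟩

theorem exists_level_card_gt (hπ : Surjective π)
    (hbranch : ∀ v, ∃ n c d, π^[n] c = v ∧ π^[n] d = v ∧ c ≠ d) (s : V) (N : ℕ) :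
    ∃ (k : ℕ) (A : Finset V), N < A.card ∧ ∀ x ∈ A, π^[k] x = s := by
  classical
  induction N with
  | zero => exact ⟨0, {s}, by simp, by simp⟩
  | succ N ih =>
    obtain ⟨k, A, hN, hA⟩ := ih
    obtain ⟨a, ha⟩ := Finset.card_pos.1 (Nat.zero_lt_of_lt hN)
    obtain ⟨n, c, d, hc, hd, hcd⟩ := hbranch a
    let g : V → V := surjInv (hπ.iterate n)
    have hg (x : V) : π^[n] (g x) = x := surjInv_eq _ x
    obtain ⟨e, he, heg⟩ : ∃ e, π^[n] e = a ∧ e ≠ g a := by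
      by_cases hcg : c = g a
      · exact ⟨d, hd, fun hdg => hcd (hcg.trans hdg.symm)⟩
      · exact ⟨c, hc, hcg⟩
    have he_notMem : e ∉ A.image g := fun hmem => by
      obtain ⟨x, -, rfl⟩ := Finset.mem_image.1 hmem
      rw [hg] at he
      exact heg (congrArg g he)
    refine ⟨k + n, insert e (A.image g), ?_, fun x hx => ?_⟩
    · rw [Finset.card_insert_of_notMem he_notMem,
        Finset.card_image_of_injective A (injective_surjInv _)]
      lia
    · rw [iterate_add_apply]
      rcases Finset.mem_insert.1 hx with rfl | hx
      · rw [he, hA a ha]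
      · obtain ⟨y, hy, rfl⟩ := Finset.mem_image.1 hx
        rw [hg, hA y hy]

theorem IsGlobalDeg.eq_finsum_fiber (hDg : T.IsGlobalDeg dE Dg) (hdeg : T.IsLocalDeg dV dE)
    {v w : V} (hvw : T.G.Adj v w) : Dg = ∑ᶠ a ∈ {a | T.F a = v}, dV a := by
  rw [hDg hvw]
  refine finsum_mem_congr rfl fun a ha => ?_
  obtain rfl : T.F a = v := ha
  obtain ⟨b, hab, rfl⟩ := T.edgeSurj hvw
  exact (hdeg.2.2.2.2 hab).symm

theorem IsGlobalDeg.card_le (hDg : T.IsGlobalDeg dE Dg) (hdeg : T.IsLocalDeg dV dE) {v w : V}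
    (hvw : T.G.Adj v w) {A : Finset V} (hA : ∀ a ∈ A, T.F a = v) : A.card ≤ Dg := by
  rw [hDg.eq_finsum_fiber hdeg hvw, finsum_mem_eq_finite_toFinset_sum _ (T.finFibers v)]
  calc A.card ≤ (T.finFibers v).toFinset.card :=
        Finset.card_le_card fun a ha => by simpa using hA a ha
    _ = ∑ a ∈ (T.finFibers v).toFinset, 1 := Finset.card_eq_sum_ones _
    _ ≤ ∑ a ∈ (T.finFibers v).toFinset, dV a := Finset.sum_le_sum fun a _ => hdeg.2.1 a

variable (T infty) in
/-- The map `F` turns the edge joining `x` to the vertex above it upside down. Total invariance of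
`infty` amounts to the absence of such edges. -/
def Flips (x : V) : Prop := T.F x = π (T.F (π x))

theorem flips_or_map_towards (x : V) : T.Flips infty x ∨ T.F (π x) = π (T.F x) :=
  (eq_towards_or_eq_towards T.isTree infty (T.adjMap (adj_towards T.isTree infty x))).symm

theorem Flips.map_ne {x : V} (h : T.Flips infty x) : T.F (π x) ≠ π (T.F x) := by
  rw [h]
  exact (towards_iterate_ne T.isTree two_ne_zero _).symm

theorem Flips.exists_child {x : V} (h : T.Flips infty x) :
    ∃ c, π c = x ∧ T.Flips infty c := by
  obtain ⟨c, hxc, hc⟩ := T.edgeSurj (adj_towards T.isTree infty (T.F x))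
  obtain rfl : x = π c := (eq_towards_or_eq_towards T.isTree infty hxc).resolve_left
    fun e => h.map_ne (e ▸ hc)
  exact ⟨c, rfl, hc⟩

theorem exists_child_of_not_flips {x u : V} (h : ¬ T.Flips infty x) (hu : π u = T.F x) :
    ∃ c, π c = x ∧ T.F c = u ∧ ¬ T.Flips infty c := by
  have ne_towards : u ≠ π (T.F x) := hu ▸ (towards_iterate_ne T.isTree two_ne_zero u).symm
  obtain ⟨c, hxc, rfl⟩ := T.edgeSurj (hu ▸ (adj_towards T.isTree infty u).symm)
  obtain rfl : x = π c := (eq_towards_or_eq_towards T.isTree infty hxc).resolve_left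
    fun e => ne_towards (e ▸ (flips_or_map_towards x).resolve_left h)
  exact ⟨c, rfl, rfl, ne_towards⟩

theorem map_above_of_forall_map_ne {b s : V}
    (hb : ∀ x, (∃ k, π^[k] x = b) ∨ ∃ k, π^[k] b = x) (hs : ∃ l, T.F s = π^[l] b)
    (hsb : ∀ k x, π^[k] x = s → T.F x ≠ b) (k : ℕ) {x : V} (hx : π^[k] x = s) :
    ∃ l, T.F x = π^[l] b := by
  induction k generalizing x with
  | zero => exact (show x = s from hx) ▸ hs
  | succ k ih =>
    obtain ⟨l, hl⟩ := ih hx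
    rcases flips_or_map_towards (infty := infty) x with h | h
    · exact ⟨l + 1, by rw [h, hl, iterate_succ_apply']⟩
    · rcases hb (T.F x) with ⟨_ | a, ha⟩ | ⟨a, ha⟩
      · exact absurd ha (hsb _ x hx)
      · rw [iterate_succ_apply, ← h, hl, ← iterate_add_apply] at ha
        obtain ⟨rfl, rfl⟩ : a = 0 ∧ l = 0 := by
          by_contra h0
          exact towards_iterate_ne T.isTree (by lia) _ ha
        exact absurd hl (hsb k (π x) hx)
      · exact ⟨a, ha.symm⟩

theorem flips_of_forall_map_ne {b s : V}
    (hb : ∀ x, (∃ k, π^[k] x = b) ∨ ∃ k, π^[k] b = x) (hs : ∃ l, T.F s = π^[l] b)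
    (hsb : ∀ k x, π^[k] x = s → T.F x ≠ b) {k : ℕ} {x : V} (hx : π^[k] x = s) :
    T.Flips infty x := by
  by_contra hflips
  obtain ⟨l, hl⟩ := map_above_of_forall_map_ne hb hs hsb k hx
  induction l generalizing k x with
  | zero => exact hsb k x hx hl
  | succ l ih =>
    obtain ⟨c, rfl, hc, hc_flips⟩ :=
      exists_child_of_not_flips hflips (u := π^[l] b) (by rw [hl, iterate_succ_apply'])
    exact ih (k := k + 1) hx hc_flips hc

theorem map_eq_iterate_of_flips {s : V} (h : ∀ k x, π^[k] x = s → T.Flips infty x) (k : ℕ)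
    {x : V} (hx : π^[k] x = s) : T.F x = π^[k] (T.F s) := by
  induction k generalizing x with
  | zero => exact congrArg T.F hx
  | succ k ih => rw [h (k + 1) x hx, ih hx, iterate_succ_apply']

theorem IsDescending.eventually_iterate_ne {c : ℕ → V} (hc : T.IsDescending infty c) (x : V) :
    ∀ᶠ n in Filter.atTop, ∀ k, π^[k] x ≠ c n := by
  by_cases h : ∃ m k, π^[k] x = c m
  · obtain ⟨m, k, hk⟩ := h
    filter_upwards [Filter.eventually_gt_atTop (m + k)] with n hn l hl
    have hm := hc.iterate_add m (n - m)
    rw [Nat.add_sub_of_le (by lia), ← hl, ← iterate_add_apply, ← hk] at hm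
    have := towards_iterate_injective T.isTree x hm
    lia
  · push Not at h
    exact .of_forall h

-- Follow flipped edges down a ray until its vertex `s` is so low that no vertex below `s` maps to
-- `b`. Then everything below `s` maps above `b`, where there is only the ray from `b` to `∞`.
theorem Flips.exists_cone_flips {w b : V} (hw : T.Flips infty w)
    (hb : ∀ x, (∃ k, π^[k] x = b) ∨ ∃ k, π^[k] b = x) :
    ∃ s, ∀ k x, π^[k] x = s → T.Flips infty x := by
  obtain ⟨c, rfl, hc, hflips⟩ := exists_descending (fun _ => Flips.exists_child) hw
  have map_ray (n : ℕ) : T.F (c n) = π^[n] (T.F (c 0)) := by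
    induction n with
    | zero => rfl
    | succ n ih => rw [hflips (n + 1), hc, ih, iterate_succ_apply']
  obtain ⟨i, j, hij⟩ := exists_common_ancestor T.isTree infty (T.F (c 0)) b
  have avoids_fiber : ∀ᶠ n in Filter.atTop, ∀ x ∈ {x | T.F x = b}, ∀ k, π^[k] x ≠ c n :=
    (Filter.eventually_all_finite (T.finFibers b)).2 fun x _ => hc.eventually_iterate_ne x
  obtain ⟨n, hn, hin⟩ := (avoids_fiber.and (Filter.eventually_ge_atTop i)).exists
  have map_above : ∃ l, T.F (c n) = π^[l] b := by
    refine ⟨n - i + j, ?_⟩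
    rw [map_ray, ← Nat.sub_add_cancel hin, iterate_add_apply, hij, ← iterate_add_apply,
      Nat.sub_add_cancel hin]
  exact ⟨c n, fun k x => flips_of_forall_map_ne hb map_above fun k x hx hxb => hn x hxb k hx⟩

theorem not_flips (hdeg : T.IsLocalDeg dV dE) (hDg : T.IsGlobalDeg dE Dg)
    (hiso : IsIsolatedEnd T.G infty) (huniq : ∀ e, IsIsolatedEnd T.G e → e = infty)
    (hval : ∀ v, (T.G.neighborSet v).ncard ≠ 1) (w : V) : ¬ T.Flips infty w := by
  intro hw
  have hπ := surjective_towards T.isTree infty hval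
  obtain ⟨b, hb⟩ := exists_comparable_of_isIsolatedEnd hiso hπ
  obtain ⟨s, hs⟩ := hw.exists_cone_flips hb
  obtain ⟨k, A, hA_card, hA⟩ :=
    exists_level_card_gt hπ (exists_branching_of_unique_isolated huniq hπ) s Dg
  have := hDg.card_le hdeg (adj_towards T.isTree infty _)
    fun x hx => map_eq_iterate_of_flips hs k (hA x hx)
  lia

theorem commute_towards (hdeg : T.IsLocalDeg dV dE) (hDg : T.IsGlobalDeg dE Dg)
    (hiso : IsIsolatedEnd T.G infty) (huniq : ∀ e, IsIsolatedEnd T.G e → e = infty)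
    (hval : ∀ v, (T.G.neighborSet v).ncard ≠ 1) : Function.Commute T.F π := fun x =>
  (flips_or_map_towards x).resolve_left (not_flips hdeg hDg hiso huniq hval x)

end TotalInvariance

end TreeDyn

theorem sum_sq_lt_sq {ι : Type*} {s : Finset ι} {f : ι → ℕ} {D : ℕ} (hD : 0 < D)
    (hsum : ∑ c ∈ s, f c ≤ D) (hf : ∀ c ∈ s, f c ≠ D) : ∑ c ∈ s, f c ^ 2 < D ^ 2 := by
  have le_pred : ∀ c ∈ s, f c ≤ D - 1 := fun c hc => by
    have := (Finset.single_le_sum_of_canonicallyOrdered hc).trans hsum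
    have := hf c hc
    lia
  calc ∑ c ∈ s, f c ^ 2 ≤ ∑ c ∈ s, f c * (D - 1) :=
        Finset.sum_le_sum fun c hc => by rw [sq]; exact Nat.mul_le_mul_left _ (le_pred c hc)
    _ = (∑ c ∈ s, f c) * (D - 1) := (Finset.sum_mul _ _ _).symm
    _ ≤ D * (D - 1) := Nat.mul_le_mul_right _ hsum
    _ < D * D := Nat.mul_lt_mul_of_pos_left (Nat.sub_one_lt hD.ne') hD
    _ = D ^ 2 := (sq D).symm

namespace TreeDyn

section Levels

variable {V : Type} (T : TreeDyn V) (infty : T.G.end)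

local notation "π" => towards T.isTree infty

theorem finite_preimage_towards (w : V) : {c | π c = w}.Finite :=
  (T.locFin w).subset fun c hc => hc ▸ (adj_towards T.isTree infty c).symm

/-- The vertices immediately below `w`. -/
noncomputable def children (w : V) : Finset V := (T.finite_preimage_towards infty w).toFinset

open Classical in
/-- The vertices `n` steps below `w`. -/
noncomputable def level (w : V) : ℕ → Finset V
  | 0 => {w}
  | n + 1 => (level w n).biUnion (T.children infty)

variable {T infty}

@[simp]
theorem mem_children {w c : V} : c ∈ T.children infty w ↔ π c = w := by
  simp [children]

@[simp]
theorem mem_level {w x : V} {n : ℕ} : x ∈ T.level infty w n ↔ π^[n] x = w := by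
  induction n generalizing x with
  | zero => simp [level]
  | succ n ih => simp [level, ih]

theorem sum_level_succ {M : Type*} [AddCommMonoid M] (w : V) (n : ℕ) (f : V → M) :
    ∑ x ∈ T.level infty w (n + 1), f x =
      ∑ x ∈ T.level infty w n, ∑ c ∈ T.children infty x, f c := by
  classical
  refine Finset.sum_biUnion fun x _ y _ hxy => Finset.disjoint_left.2 fun c hx hy => hxy ?_
  rw [← mem_children.1 hx, mem_children.1 hy]

end Levels

section Counting

variable {V : Type} {T : TreeDyn V} {infty : T.G.end} {dV : V → ℕ} {dE : V → V → ℕ}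

local notation "π" => towards T.isTree infty

theorem eq_towards_of_map_eq (hF : Function.Commute T.F π) {v w : V} (hvw : T.G.Adj v w)
    (h : T.F w = π (T.F v)) : w = π v := by
  refine (eq_towards_or_eq_towards T.isTree infty hvw).resolve_right ?_
  rintro rfl
  rw [hF w] at h
  exact towards_iterate_ne T.isTree two_ne_zero _ h.symm

theorem dE_towards (hdeg : T.IsLocalDeg dV dE) (hF : Function.Commute T.F π) (v : V) :
    dE v (π v) = dV v := by
  have same_image : {w | T.G.Adj v w ∧ T.F w = T.F (π v)} = {π v} :=
    Set.eq_singleton_iff_unique_mem.2 ⟨⟨adj_towards T.isTree infty v, rfl⟩,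
      fun w hw => eq_towards_of_map_eq hF hw.1 (hw.2.trans (hF v))⟩
  rw [hdeg.2.2.2.2 (adj_towards T.isTree infty v), same_image, finsum_mem_singleton]

theorem coe_insert_children (w : V) [DecidableEq V] :
    (insert (π w) (T.children infty w) : Finset V) = T.G.neighborSet w := by
  ext x
  rw [Finset.mem_coe, Finset.mem_insert, mem_children, mem_neighborSet]
  constructor
  · rintro (rfl | rfl)
    · exact adj_towards T.isTree infty w
    · exact (adj_towards T.isTree infty x).symm
  · exact fun h => (eq_towards_or_eq_towards T.isTree infty h).imp_right Eq.symm

theorem dV_sub_one_eq_multV_add_sum_children (hdeg : T.IsLocalDeg dV dE)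
    (hF : Function.Commute T.F π) (w : V) :
    dV w - 1 = T.multV dV dE w + ∑ c ∈ T.children infty w, (dV c - 1) := by
  classical
  have towards_notMem : π w ∉ T.children infty w := fun h =>
    towards_iterate_ne T.isTree two_ne_zero w (mem_children.1 h)
  have sum_edges : ∑ᶠ x ∈ T.G.neighborSet w, (dE w x - 1) =
      (dV w - 1) + ∑ c ∈ T.children infty w, (dV c - 1) := by
    rw [← coe_insert_children (infty := infty), finsum_mem_coe_finset,
      Finset.sum_insert towards_notMem, dE_towards hdeg hF]
    refine congrArg _ (Finset.sum_congr rfl fun c hc => ?_)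
    rw [hdeg.1, ← mem_children.1 hc, dE_towards hdeg hF]
  have riemannHurwitz := hdeg.2.2.2.1 w
  rw [multV, sum_edges]
  rw [sum_edges] at riemannHurwitz
  lia

theorem multV_le_dV_sub_one (hdeg : T.IsLocalDeg dV dE) (hF : Function.Commute T.F π) (w : V) :
    T.multV dV dE w ≤ dV w - 1 :=
  (dV_sub_one_eq_multV_add_sum_children hdeg hF w).symm ▸ Nat.le_add_right _ _

theorem sum_children_dV_sub_one_le (hdeg : T.IsLocalDeg dV dE) (hF : Function.Commute T.F π)
    (w : V) : ∑ c ∈ T.children infty w, (dV c - 1) ≤ dV w - 1 :=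
  (dV_sub_one_eq_multV_add_sum_children hdeg hF w).symm ▸ Nat.le_add_left _ _

theorem dV_le_dV_towards (hdeg : T.IsLocalDeg dV dE) (hF : Function.Commute T.F π) (c : V) :
    dV c ≤ dV (π c) := by
  have := (Finset.single_le_sum_of_canonicallyOrdered (f := fun c => dV c - 1)
    (mem_children.2 rfl)).trans (sum_children_dV_sub_one_le hdeg hF (π c))
  have := hdeg.2.1 (π c)
  lia

theorem dV_le_dV_iterate (hdeg : T.IsLocalDeg dV dE) (hF : Function.Commute T.F π) (n : ℕ)
    (c : V) : dV c ≤ dV (π^[n] c) :=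
  Iterate.rec (dV c ≤ dV ·) le_rfl (fun x hx => hx.trans (dV_le_dV_towards hdeg hF x)) n

theorem dV_sub_one_eq_sum_level (hdeg : T.IsLocalDeg dV dE) (hF : Function.Commute T.F π)
    (w : V) (n : ℕ) :
    dV w - 1 = ∑ k ∈ Finset.range n, ∑ x ∈ T.level infty w k, T.multV dV dE x +
      ∑ x ∈ T.level infty w n, (dV x - 1) := by
  induction n with
  | zero => simp [level]
  | succ n ih =>
    rw [ih, Finset.sum_range_succ, sum_level_succ, add_assoc, ← Finset.sum_add_distrib]
    exact congrArg _ (Finset.sum_congr rfl fun x _ =>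
      dV_sub_one_eq_multV_add_sum_children hdeg hF x)

theorem noncritical_of_dV_iterate_eq (hdeg : T.IsLocalDeg dV dE) (hF : Function.Commute T.F π)
    {n : ℕ} {z : V} (hz : dV (π^[n] z) = dV z) :
    (∀ k < n, ∀ x, π^[k] x = π^[n] z → T.multV dV dE x = 0) ∧
      ∀ x, π^[n] x = π^[n] z → x ≠ z → dV x = 1 := by
  classical
  have hsum := dV_sub_one_eq_sum_level hdeg hF (π^[n] z) n
  rw [hz, ← Finset.add_sum_erase _ _ (mem_level.2 rfl), add_left_comm, left_eq_add,
    Nat.add_eq_zero_iff] at hsum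
  refine ⟨fun k hk x hx => ?_, fun x hx hxz => ?_⟩
  · exact Finset.sum_eq_zero_iff.1 (Finset.sum_eq_zero_iff.1 hsum.1 k (Finset.mem_range.2 hk)) x
      (mem_level.2 hx)
  · have := Finset.sum_eq_zero_iff.1 hsum.2 x (Finset.mem_erase.2 ⟨hxz, mem_level.2 hx⟩)
    have := hdeg.2.1 x
    lia

-- The sum of `(dV x - 1) ^ 2` over a level drops as soon as some degree splits, so it can do so
-- only finitely often.
theorem exists_forall_exists_child_dV_eq (hdeg : T.IsLocalDeg dV dE)
    (hF : Function.Commute T.F π) (w : V) :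
    ∃ N, ∀ n ≥ N, ∀ x, π^[n] x = w → dV x ≠ 1 → ∃ c, π c = x ∧ dV c = dV x := by
  have sum_sq_le (x : V) : ∑ c ∈ T.children infty x, (dV c - 1) ^ 2 ≤ (dV x - 1) ^ 2 :=
    (Finset.sum_sq_le_sq_sum_of_nonneg fun _ _ => Nat.zero_le _).trans
      (Nat.pow_le_pow_left (sum_children_dV_sub_one_le hdeg hF x) 2)
  let Q (n : ℕ) : ℕ := ∑ x ∈ T.level infty w n, (dV x - 1) ^ 2
  have Q_succ (n : ℕ) :
      Q (n + 1) = ∑ x ∈ T.level infty w n, ∑ c ∈ T.children infty x, (dV c - 1) ^ 2 :=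
    sum_level_succ w n _
  have Q_antitone : Antitone Q := antitone_nat_of_succ_le fun n =>
    (Q_succ n).trans_le (Finset.sum_le_sum fun x _ => sum_sq_le x)
  obtain ⟨N, hN⟩ := WellFoundedLT.antitone_chain_condition Q_antitone
  refine ⟨N, fun n hn x hx hx1 => ?_⟩
  have dV_pos := hdeg.2.1
  by_contra! hsplit
  have sum_sq_lt : ∑ c ∈ T.children infty x, (dV c - 1) ^ 2 < (dV x - 1) ^ 2 :=
    sum_sq_lt_sq (by have := dV_pos x; lia) (sum_children_dV_sub_one_le hdeg hF x) fun c hc => by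
      have := hsplit c (mem_children.1 hc)
      have := dV_pos c
      have := dV_pos x
      lia
  have Q_lt : Q (n + 1) < Q n := (Q_succ n).trans_lt
    (Finset.sum_lt_sum (fun y _ => sum_sq_le y) ⟨x, mem_level.2 hx, sum_sq_lt⟩)
  exact Q_lt.ne ((hN (n + 1) (by lia)).symm.trans (hN n hn))

theorem multEnd_le_dV_sub_one {p : T.G.end} {v : V} (h : T.EndBelow infty v p) :
    T.multEnd infty dV p ≤ dV v - 1 :=
  Nat.sub_le_sub_right (Nat.sInf_le (s := {d | ∃ v, T.EndBelow infty v p ∧ dV v = d})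
    ⟨v, h, rfl⟩) 1

theorem multEnd_eq_zero_of_dV_eq_one {p : T.G.end} {v : V} (h : T.EndBelow infty v p)
    (hv : dV v = 1) : T.multEnd infty dV p = 0 := by
  simpa only [hv, Nat.sub_self, Nat.le_zero] using multEnd_le_dV_sub_one (dV := dV) h

theorem multEnd_eq_of_forall_le {p : T.G.end} {x : V} (hx : T.EndBelow infty x p)
    (hle : ∀ v, T.EndBelow infty v p → dV x ≤ dV v) : T.multEnd infty dV p = dV x - 1 := by
  have hleast : IsLeast {d | ∃ v, T.EndBelow infty v p ∧ dV v = d} (dV x) :=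
    ⟨⟨x, hx, rfl⟩, fun _ ⟨v, hv, hd⟩ => hd ▸ hle v hv⟩
  rw [multEnd, hleast.csInf_eq]

theorem exists_multEnd_eq (hdeg : T.IsLocalDeg dV dE) (hF : Function.Commute T.F π) {x : V}
    (hchild : ∀ k y, π^[k] y = x → dV y = dV x → ∃ c, π c = y ∧ dV c = dV y) :
    ∃ p, T.EndBelow infty x p ∧ T.multEnd infty dV p = dV x - 1 := by
  obtain ⟨c, rfl, hc, hcx⟩ :=
    exists_descending (T := T) (infty := infty) (P := fun y => (∃ k, π^[k] y = x) ∧ dV y = dV x)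
    (by
      rintro y ⟨⟨k, hk⟩, hy⟩
      obtain ⟨d, rfl, hd⟩ := hchild k y hk hy
      exact ⟨d, rfl, ⟨k + 1, hk⟩, hd.trans hy⟩)
    ⟨⟨0, rfl⟩, rfl⟩
  obtain ⟨p, hp⟩ := hc.exists_end
  refine ⟨p, hp 0, multEnd_eq_of_forall_le (hp 0) fun v hv => ?_⟩
  obtain ⟨n, k, rfl⟩ := hc.exists_iterate_eq hp hv
  exact (hcx n).2.symm.trans_le (dV_le_dV_iterate hdeg hF k (c n))

theorem multEnd_eq_zero_of_ne (hdeg : T.IsLocalDeg dV dE) (hF : Function.Commute T.F π) {x : V}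
    {p q : T.G.end} (hp : T.EndBelow infty x p) (hpx : T.multEnd infty dV p = dV x - 1)
    (hq : T.EndBelow infty x q) (hpq : p ≠ q) : T.multEnd infty dV q = 0 := by
  obtain ⟨n, c, d, rfl, hd, hne, hcp, hdq⟩ := exists_separating hp hq hpq
  have dV_eq : dV (π^[n] c) = dV c := by
    have := multEnd_le_dV_sub_one (dV := dV) hcp
    have := dV_le_dV_iterate hdeg hF n c
    have := hdeg.2.1 c
    lia
  exact multEnd_eq_zero_of_dV_eq_one hdq
    ((noncritical_of_dV_iterate_eq hdeg hF dV_eq).2 d hd hne.symm)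

theorem finsum_below_eq_sum_level {M : Type*} [AddCommMonoid M] {w : V} {N : ℕ} {f : V → M}
    (hf : ∀ n ≥ N, ∀ x, π^[n] x = w → f x = 0) :
    ∑ᶠ x ∈ {x | T.Below infty w x}, f x =
      ∑ k ∈ Finset.range N, ∑ x ∈ T.level infty w k, f x := by
  classical
  rw [← Finset.sum_biUnion fun k _ l _ hkl => Finset.disjoint_left.2 fun x hk hl =>
    hkl (towards_iterate_injective T.isTree x ((mem_level.1 hk).trans (mem_level.1 hl).symm))]
  refine finsum_mem_eq_sum_of_inter_support_eq _ (Set.ext fun x => and_congr_left fun hx => ?_)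
  simp only [Set.mem_ofPred_eq, Finset.coe_biUnion, Finset.mem_coe, Finset.mem_range,
    Set.mem_iUnion, mem_level, below_iff, exists_prop]
  exact exists_congr fun k =>
    (and_iff_right_of_imp fun hk => not_le.1 fun hNk => hx (hf k hNk x hk)).symm

theorem finsum_endBelow_eq_sum_level (hdeg : T.IsLocalDeg dV dE) (hF : Function.Commute T.F π)
    {w : V} {N : ℕ}
    (hN : ∀ n ≥ N, ∀ x, π^[n] x = w → dV x ≠ 1 → ∃ c, π c = x ∧ dV c = dV x) :
    ∑ᶠ p ∈ {p | T.EndBelow infty w p}, T.multEnd infty dV p =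
      ∑ x ∈ T.level infty w N, (dV x - 1) := by
  classical
  have : Nonempty T.G.end := ⟨infty⟩
  have exists_end (x : V) (hx : π^[N] x = w) (hx1 : dV x - 1 ≠ 0) :
      ∃ p, T.EndBelow infty x p ∧ T.multEnd infty dV p = dV x - 1 :=
    exists_multEnd_eq hdeg hF fun k y hy hyx =>
      hN (N + k) (Nat.le_add_right N k) y (by rw [iterate_add_apply, hy, hx]) (by lia)
  choose! P hxP hP using exists_end
  rw [← Finset.sum_filter_ne_zero, ← finsum_mem_coe_finset, ← finsum_mem_inter_support]
  symm
  simp only [Finset.coe_filter, mem_level]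
  refine finsum_mem_eq_of_bijOn P ⟨?_, ?_, ?_⟩ fun x hx => (hP x hx.1 hx.2).symm
  · rintro x ⟨rfl, hx1⟩
    exact ⟨(hxP x rfl hx1).iterate N, (hP x rfl hx1).trans_ne hx1⟩
  · rintro x ⟨hx, hx1⟩ y ⟨hy, hy1⟩ hxy
    exact (hxP x hx hx1).eq_of_iterate_eq (hxy ▸ hxP y hy hy1) (hx.trans hy.symm)
  · rintro p ⟨hp, hp0⟩
    obtain ⟨x, hx, hxp⟩ := EndBelow.exists_descendant hp N
    have hx1 : dV x - 1 ≠ 0 := fun h => hp0 (Nat.le_zero.1 (h ▸ multEnd_le_dV_sub_one hxp))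
    refine ⟨x, ⟨hx, hx1⟩, ?_⟩
    by_contra hne
    exact hp0 (multEnd_eq_zero_of_ne hdeg hF (hxP x hx hx1) (hP x hx hx1) hxp hne)

theorem dV_sub_one_eq_finsum_below (hdeg : T.IsLocalDeg dV dE) (hF : Function.Commute T.F π)
    (w : V) :
    dV w - 1 = (∑ᶠ x ∈ {x | T.Below infty w x}, T.multV dV dE x) +
      ∑ᶠ p ∈ {p | T.EndBelow infty w p}, T.multEnd infty dV p := by
  obtain ⟨N, hN⟩ := exists_forall_exists_child_dV_eq hdeg hF w
  rw [dV_sub_one_eq_sum_level hdeg hF w N, finsum_endBelow_eq_sum_level hdeg hF hN,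
    finsum_below_eq_sum_level fun n hn x hx => ?_]
  by_cases hx1 : dV x = 1
  · simpa only [hx1, Nat.sub_self, Nat.le_zero] using multV_le_dV_sub_one hdeg hF x
  · obtain ⟨c, rfl, hc⟩ := hN n hn x hx hx1
    exact (noncritical_of_dV_iterate_eq (n := 1) hdeg hF hc.symm).1 0 one_pos _ rfl

end Counting

section GlobalDegree

variable {V : Type} {T : TreeDyn V} {infty : T.G.end} {dV : V → ℕ} {dE : V → V → ℕ} {Dg : ℕ}

local notation "π" => towards T.isTree infty

theorem exists_map_eq_of_map_eq_iterate (hF : Function.Commute T.F π) {a y : V} {n : ℕ}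
    (ha : T.F a = π^[n] y) : ∃ c, T.F c = y ∧ π^[n] c = a := by
  induction n generalizing y with
  | zero => exact ⟨a, ha, rfl⟩
  | succ n ih =>
    obtain ⟨c, hc, rfl⟩ := ih ha
    obtain ⟨d, hcd, rfl⟩ := T.edgeSurj (hc ▸ (adj_towards T.isTree infty y).symm)
    obtain rfl : c = π d := eq_towards_of_map_eq hF hcd.symm hc
    exact ⟨d, rfl, rfl⟩

theorem exists_fiber_eq_singleton (hF : Function.Commute T.F π) :
    ∃ b, ∀ j, {a | T.F a = T.F (π^[j] b)} = {π^[j] b} := by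
  obtain ⟨v⟩ := T.isTree.connected.nonempty
  have map_iterate (n : ℕ) (x : V) : T.F (π^[n] x) = π^[n] (T.F x) :=
    (Semiconj.iterate_right hF n).eq x
  obtain ⟨b, hb⟩ := exists_upper_bound T.isTree infty (T.finFibers (T.F v)).toFinset
  simp only [Set.Finite.mem_toFinset, Set.mem_ofPred_eq] at hb
  obtain ⟨k, rfl⟩ := hb v rfl
  have same_height {a : V} (ha : T.F a = T.F v) : π^[k] a = π^[k] v := by
    obtain ⟨l, hl⟩ := hb a ha
    obtain rfl : l = k := towards_iterate_injective T.isTree (T.F v) (p := infty) (by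
      simp only [← map_iterate, ← hl]
      rw [map_iterate, map_iterate, ha])
    exact hl
  refine ⟨π^[k] v, fun j => Set.eq_singleton_iff_unique_mem.2 ⟨rfl, fun a ha => ?_⟩⟩
  rw [Set.mem_ofPred_eq, ← iterate_add_apply, map_iterate] at ha
  obtain ⟨c, hc, rfl⟩ := exists_map_eq_of_map_eq_iterate hF ha
  rw [iterate_add_apply, same_height hc]

theorem exists_forall_dV_iterate_eq (hdeg : T.IsLocalDeg dV dE) (hDg : T.IsGlobalDeg dE Dg)
    (hF : Function.Commute T.F π) : ∃ z, ∀ j, dV (π^[j] z) = Dg := by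
  obtain ⟨z, hz⟩ := exists_fiber_eq_singleton hF
  refine ⟨z, fun j => ?_⟩
  rw [hDg.eq_finsum_fiber hdeg (adj_towards T.isTree infty (T.F (π^[j] z))), hz,
    finsum_mem_singleton]

theorem below_of_multV_ne_zero (hdeg : T.IsLocalDeg dV dE) (hF : Function.Commute T.F π) {z : V}
    (hz : ∀ j, dV (π^[j] z) = dV z) {x : V} (hx : T.multV dV dE x ≠ 0) : T.Below infty z x := by
  obtain ⟨i, j, hij⟩ := exists_common_ancestor T.isTree infty x z
  obtain ⟨above, off⟩ := noncritical_of_dV_iterate_eq hdeg hF (hz j)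
  obtain ⟨d, rfl⟩ := Nat.exists_eq_add_of_le (not_lt.1 fun h => hx (above i h x hij))
  refine below_iff.2 ⟨d, ?_⟩
  by_contra hne
  have dV_eq_one := off (π^[d] x) (by rw [← iterate_add_apply, hij]) hne
  have dV_le := dV_le_dV_iterate hdeg hF d x
  have := multV_le_dV_sub_one hdeg hF x
  lia

theorem endBelow_of_multEnd_ne_zero (hdeg : T.IsLocalDeg dV dE) (hF : Function.Commute T.F π)
    {z : V} (hz : ∀ j, dV (π^[j] z) = dV z) {p : T.G.end} (hp : p ≠ infty)
    (hp0 : T.multEnd infty dV p ≠ 0) : T.EndBelow infty z p := by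
  obtain ⟨v, hv⟩ := exists_endBelow hp
  obtain ⟨i, j, hij⟩ := exists_common_ancestor T.isTree infty v z
  obtain ⟨x, hx, hxp⟩ := (hij ▸ hv.iterate i).exists_descendant j
  obtain rfl : x = z := by
    by_contra hne
    exact hp0 (multEnd_eq_zero_of_dV_eq_one hxp
      ((noncritical_of_dV_iterate_eq hdeg hF (hz j)).2 x hx hne))
  exact hxp

theorem finsum_multV_add_finsum_multEnd (hdeg : T.IsLocalDeg dV dE) (hDg : T.IsGlobalDeg dE Dg)
    (hF : Function.Commute T.F π) :
    (∑ᶠ v, T.multV dV dE v) + ∑ᶠ p ∈ {p | p ≠ infty}, T.multEnd infty dV p = Dg - 1 := by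
  obtain ⟨z, hz⟩ := exists_forall_dV_iterate_eq hdeg hDg hF
  obtain rfl : dV z = Dg := hz 0
  rw [dV_sub_one_eq_finsum_below hdeg hF z, ← finsum_mem_univ,
    finsum_mem_inter_support_eq' _ Set.univ {x | T.Below infty z x} fun x hx =>
      iff_of_true trivial (below_of_multV_ne_zero hdeg hF hz hx),
    finsum_mem_inter_support_eq' _ {p | p ≠ infty} {p | T.EndBelow infty z p} fun p hp =>
      ⟨fun h => endBelow_of_multEnd_ne_zero hdeg hF hz h hp, EndBelow.ne_infty⟩]

theorem dE_eq_dV_of_below (hdeg : T.IsLocalDeg dV dE) (hF : Function.Commute T.F π) {v w : V}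
    (hvw : T.G.Adj v w) (h : T.Below infty v w) : dE v w = dV w := by
  obtain ⟨k, rfl⟩ := below_iff.1 h
  have hparent := (eq_towards_or_eq_towards T.isTree infty hvw).resolve_left fun hw => by
    rw [← iterate_succ_apply' π] at hw
    exact towards_iterate_ne T.isTree k.succ_ne_zero w hw.symm
  rw [hparent, hdeg.1, dE_towards hdeg hF]

end GlobalDegree

end TreeDyn

theorem critical_point_count_general {V : Type} (T : TreeDyn V) (infty : T.G.end)
    (hF : Function.Commute T.F (towards T.isTree infty))
    (dV : V → ℕ) (dE : V → V → ℕ) (hdeg : T.IsLocalDeg dV dE)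
    (Dg : ℕ) (hDg : T.IsGlobalDeg dE Dg) :
    ((∑ᶠ v : V, T.multV dV dE v) +
        (∑ᶠ p ∈ {p : T.G.end | p ≠ infty}, T.multEnd infty dV p) = Dg - 1) ∧
    (∀ v w : V, T.G.Adj v w → T.Below infty v w →
      dE v w = 1 + ((∑ᶠ x ∈ {x : V | T.Below infty w x}, T.multV dV dE x) +
        ∑ᶠ p ∈ {p : T.G.end | T.EndBelow infty w p}, T.multEnd infty dV p)) := by
  refine ⟨TreeDyn.finsum_multV_add_finsum_multEnd hdeg hDg hF, fun v w hvw hbelow => ?_⟩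
  rw [TreeDyn.dE_eq_dV_of_below hdeg hF hvw hbelow, ← TreeDyn.dV_sub_one_eq_finsum_below hdeg hF w,
    Nat.add_sub_of_le (hdeg.2.1 w)]

/-- **Counting critical points.**
Let `F : T → T` be a polynomial-like branched covering with local degree
function `(dV, dE)` and global degree `Dg`.  Then
(a) the total number of critical points of `F` counted with multiplicity is
`Dg − 1`: the sum of the critical multiplicities of all vertices plus the sum
of the critical multiplicities of all ends other than `infty` equals `Dg − 1`;
(b) the degree of any edge is one more than the number of critical points
below it, counted with multiplicity: for an edge `{v,w}` with lower endpoint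
`w`, `dE v w` equals `1` plus the sum of the multiplicities of all vertices
and ends below `w`. -/
theorem critical_point_count
    {V : Type} (T : TreeDyn V) (infty : T.G.end)
    (hpl : T.IsPolyLike infty)
    (dV : V → ℕ) (dE : V → V → ℕ) (hdeg : T.IsLocalDeg dV dE)
    (Dg : ℕ) (hDg : T.IsGlobalDeg dE Dg) :
    ((∑ᶠ v : V, T.multV dV dE v) +
        (∑ᶠ p ∈ {p : T.G.end | p ≠ infty}, T.multEnd infty dV p) = Dg - 1) ∧
    (∀ v w : V, T.G.Adj v w → T.Below infty v w →
      dE v w = 1 + ((∑ᶠ x ∈ {x : V | T.Below infty w x}, T.multV dV dE x) +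
        ∑ᶠ p ∈ {p : T.G.end | T.EndBelow infty w p}, T.multEnd infty dV p)) :=
  critical_point_count_general T infty
    (TreeDyn.commute_towards hdeg hDg hpl.2.1 hpl.2.2.1 hpl.2.2.2.1) dV dE hdeg Dg hDg
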